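/- arXiv:1907.02189 — 5 statements merged into one kernel-verified Lean document; each statement's English description precedes it below -/
import Mathlib

section
/- Let H be a real inner product space, N ≥ 1, and let p_1,…,p_N ≥ 0 with Σ_{k=1}^N p_k = 1. Let F_1,…,F_N : H → ℝ be differentiable, L-smooth and μ-strongly convex (with 0 < μ and 0 < L), and assume each F_k attains a minimum value F_k^*. Let F = Σ_k p_k F_k attain its minimum value F^* at a point w^*, and set Γ = F^* − Σ_k p_k F_k^*. Then for any points w_1,…,w_N ∈ H, writing w̄ = Σ_k p_k w_k and ḡ = Σ_k p_k ∇F_k(w_k), and any step size η with 0 < η ≤ 1/(4L), one has ‖w̄ − η ḡ − w^*‖² ≤ (1 − μη) ‖w̄ − w^*‖² + 2 Σ_k p_k ‖w̄ − w_k‖² + 6 L η² Γ. -/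
open Finset
open scoped RealInnerProductSpace

theorem fedavg_jensen {H : Type*} [NormedAddCommGroup H] [InnerProductSpace ℝ H] {N : ℕ}
    (p : Fin N → ℝ) (hp : ∀ k, 0 ≤ p k) (hpsum : ∑ k, p k = 1) (v : Fin N → H) :
    ‖∑ k, p k • v k‖ ^ 2 ≤ ∑ k, p k * ‖v k‖ ^ 2 := by
  set m := ∑ k, p k • v k with hm
  have h1 : ∑ k, p k * (2 * ⟪v k, m⟫ - ‖m‖ ^ 2) ≤ ∑ k, p k * ‖v k‖ ^ 2 := by
    refine Finset.sum_le_sum fun k _ => mul_le_mul_of_nonneg_left ?_ (hp k)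
    have := norm_sub_sq_real (v k) m
    nlinarith [sq_nonneg ‖v k - m‖]
  have h2 : ∑ k, p k * ⟪v k, m⟫ = ‖m‖ ^ 2 := by
    rw [← real_inner_self_eq_norm_sq]
    conv_rhs => rw [hm, sum_inner]
    simp only [real_inner_smul_left, ← hm]
  have h3 : ∑ k, p k * (2 * ⟪v k, m⟫ - ‖m‖ ^ 2)
      = 2 * ∑ k, p k * ⟪v k, m⟫ - (∑ k, p k) * ‖m‖ ^ 2 := by
    rw [Finset.mul_sum, Finset.sum_mul, ← Finset.sum_sub_distrib]
    exact Finset.sum_congr rfl fun k _ => by ring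
  rw [h3, h2, hpsum] at h1
  linarith

theorem fedavg_grad_bound {H : Type*} [NormedAddCommGroup H] [InnerProductSpace ℝ H]
    (f : H → ℝ) (g : H → H) (L b : ℝ) (hL : 0 < L)
    (hs : ∀ v u, f v ≤ f u + ⟪g u, v - u⟫ + L / 2 * ‖v - u‖ ^ 2)
    (hb : ∀ v, b ≤ f v) (u : H) : ‖g u‖ ^ 2 ≤ 2 * L * (f u - b) := by
  have h := (hb _).trans (hs (u - L⁻¹ • g u) u)
  have e : u - L⁻¹ • g u - u = -(L⁻¹ • g u) := by abel
  rw [e, inner_neg_right, real_inner_smul_right, norm_neg, norm_smul, mul_pow,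
    real_inner_self_eq_norm_sq, Real.norm_eq_abs, sq_abs] at h
  have e2 : 2 * L * (f u + -(L⁻¹ * ‖g u‖ ^ 2) + L / 2 * (L⁻¹ ^ 2 * ‖g u‖ ^ 2))
      = 2 * L * f u - ‖g u‖ ^ 2 := by
    field_simp
    ring
  have := mul_le_mul_of_nonneg_left h (by positivity : 0 ≤ 2 * L)
  rw [e2] at this
  linarith

/-- Deterministic core of Lemma 1 of "On the Convergence of FedAvg on Non-IID Data":
one-step descent bound for the averaged FedAvg iterate. -/
theorem fedavg_one_step_descent
    {H : Type*} [NormedAddCommGroup H] [InnerProductSpace ℝ H]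
    (N : ℕ) (hN : 1 ≤ N)
    (p : Fin N → ℝ) (hp : ∀ k, 0 ≤ p k) (hpsum : ∑ k, p k = 1)
    (F : Fin N → H → ℝ) (gf : Fin N → H → H)
    (L μ : ℝ) (hμ : 0 < μ) (hL : 0 < L)
    (hdiff : ∀ k x, HasFDerivAt (F k) ((innerSL ℝ) (gf k x)) x)
    (hsmooth : ∀ k v u, F k v ≤ F k u + ⟪gf k u, v - u⟫ + L / 2 * ‖v - u‖ ^ 2)
    (hconv : ∀ k v u, F k v ≥ F k u + ⟪gf k u, v - u⟫ + μ / 2 * ‖v - u‖ ^ 2)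
    (Fstar : Fin N → ℝ) (hFstar : ∀ k, IsLeast (Set.range (F k)) (Fstar k))
    (Fglobstar : ℝ) (wstar : H)
    (hglob : IsLeast (Set.range fun x => ∑ k, p k * F k x) Fglobstar)
    (hattain : ∑ k, p k * F k wstar = Fglobstar)
    (Γ : ℝ) (hΓ : Γ = Fglobstar - ∑ k, p k * Fstar k)
    (w : Fin N → H) (η : ℝ) (hη : 0 < η) (hη' : η ≤ 1 / (4 * L)) :
    ‖(∑ k, p k • w k) - η • (∑ k, p k • gf k (w k)) - wstar‖ ^ 2 ≤
      (1 - μ * η) * ‖(∑ k, p k • w k) - wstar‖ ^ 2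
        + 2 * ∑ k, p k * ‖(∑ j, p j • w j) - w k‖ ^ 2
        + 6 * L * η ^ 2 * Γ := by
  set x := ∑ k, p k • w k with hx
  have hLη : L * η ≤ 1 / 4 := by
    rw [le_div_iff₀ (by positivity)] at hη'
    linarith
  have hLη0 : 0 < L * η := by positivity
  have hmin : ∀ k v, Fstar k ≤ F k v := fun k v => (hFstar k).2 ⟨v, rfl⟩
  have hgb : ∀ k u, ‖gf k u‖ ^ 2 ≤ 2 * L * (F k u - Fstar k) := fun k u =>
    fedavg_grad_bound (F k) (gf k) L (Fstar k) hL (hsmooth k) (hmin k) u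
  have key : ∀ k, -2 * η * ⟪x - wstar, gf k (w k)⟫ + η ^ 2 * ‖gf k (w k)‖ ^ 2
      ≤ 2 * ‖x - w k‖ ^ 2 - μ * η * ‖w k - wstar‖ ^ 2
        - 4 * L * η ^ 2 * Fstar k + 2 * η * F k wstar
        - (1 - 2 * (L * η)) * (2 * η * F k x - 2 * η ^ 2 * L * (F k x - Fstar k)) := by
    intro k
    have a1 := hgb k (w k)
    have a2 := hgb k x
    have a3 := hconv k wstar (w k)
    have a4 := hconv k (w k) x
    have a5 : ⟪x - wstar, gf k (w k)⟫
        = ⟪x - w k, gf k (w k)⟫ - ⟪gf k (w k), wstar - w k⟫ := by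
      rw [real_inner_comm (wstar - w k), ← inner_sub_left]
      congr 1
      abel
    have a6 : 0 ≤ ‖x - w k‖ ^ 2 + 2 * η * ⟪x - w k, gf k (w k)⟫
        + η ^ 2 * ‖gf k (w k)‖ ^ 2 := by
      have := norm_add_sq_real (x - w k) (η • gf k (w k))
      rw [real_inner_smul_right, norm_smul, mul_pow, Real.norm_eq_abs, sq_abs] at this
      nlinarith [sq_nonneg ‖x - w k + η • gf k (w k)‖]
    have a7 : 0 ≤ ‖x - w k‖ ^ 2 + 2 * η * ⟪gf k x, w k - x⟫ + η ^ 2 * ‖gf k x‖ ^ 2 := by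
      have := norm_add_sq_real (w k - x) (η • gf k x)
      rw [real_inner_smul_right, norm_smul, mul_pow, Real.norm_eq_abs, sq_abs,
        norm_sub_rev (w k) x, real_inner_comm] at this
      nlinarith [sq_nonneg ‖w k - x + η • gf k x‖]
    rw [norm_sub_rev wstar (w k)] at a3
    have b1 := mul_le_mul_of_nonneg_left a1 (sq_nonneg η)
    have b2 := mul_le_mul_of_nonneg_left a2 (sq_nonneg η)
    have b3 := mul_le_mul_of_nonneg_left a3 (by positivity : 0 ≤ 2 * η)
    have b4 : F k x + ⟪gf k x, w k - x⟫ ≤ F k (w k) := by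
      have : 0 ≤ μ / 2 * ‖w k - x‖ ^ 2 := by positivity
      linarith
    have b5 := mul_le_mul_of_nonneg_left b4 (by positivity : 0 ≤ 2 * η)
    have c1 : 2 * η * F k x - 2 * η ^ 2 * L * (F k x - Fstar k) - ‖x - w k‖ ^ 2
        ≤ 2 * η * F k (w k) := by linarith
    have c2 := mul_le_mul_of_nonneg_left c1 (by linarith : 0 ≤ 1 - 2 * (L * η))
    have c3 : 0 ≤ (L * η) * ‖x - w k‖ ^ 2 := by positivity
    rw [a5]
    linarith
  have hsum := Finset.sum_le_sum fun k (_ : k ∈ Finset.univ) =>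
    mul_le_mul_of_nonneg_left (key k) (hp k)
  have eL : ∑ k, p k * (-2 * η * ⟪x - wstar, gf k (w k)⟫ + η ^ 2 * ‖gf k (w k)‖ ^ 2)
      = -2 * η * ⟪x - wstar, ∑ k, p k • gf k (w k)⟫
        + η ^ 2 * ∑ k, p k * ‖gf k (w k)‖ ^ 2 := by
    rw [inner_sum, Finset.mul_sum, Finset.mul_sum, ← Finset.sum_add_distrib]
    refine Finset.sum_congr rfl fun k _ => ?_
    rw [real_inner_smul_right]
    ring
  have eR : ∑ k, p k * (2 * ‖x - w k‖ ^ 2 - μ * η * ‖w k - wstar‖ ^ 2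
        - 4 * L * η ^ 2 * Fstar k + 2 * η * F k wstar
        - (1 - 2 * (L * η)) * (2 * η * F k x - 2 * η ^ 2 * L * (F k x - Fstar k)))
      = 2 * ∑ k, p k * ‖x - w k‖ ^ 2 - μ * η * ∑ k, p k * ‖w k - wstar‖ ^ 2
        - 4 * L * η ^ 2 * ∑ k, p k * Fstar k + 2 * η * ∑ k, p k * F k wstar
        - (1 - 2 * (L * η)) * (2 * η * (1 - L * η)) * ∑ k, p k * F k x
        - (1 - 2 * (L * η)) * (2 * η ^ 2 * L) * ∑ k, p k * Fstar k := by
    simp only [Finset.mul_sum, ← Finset.sum_add_distrib, ← Finset.sum_sub_distrib]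
    exact Finset.sum_congr rfl fun k _ => by ring
  rw [eL, eR, hattain] at hsum
  have hE : Fglobstar ≤ ∑ k, p k * F k x := hglob.2 ⟨x, rfl⟩
  have hB : ∑ k, p k * Fstar k ≤ Fglobstar := by
    rw [← hattain]
    exact Finset.sum_le_sum fun k _ => mul_le_mul_of_nonneg_left (hmin k _) (hp k)
  have hJ1 := fedavg_jensen p hp hpsum (fun k => gf k (w k))
  have hJ2 := fedavg_jensen p hp hpsum (fun k => w k - wstar)
  have hxs : ∑ k, p k • (w k - wstar) = x - wstar := by
    simp only [smul_sub, Finset.sum_sub_distrib, ← Finset.sum_smul, hpsum, one_smul, hx]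
  rw [hxs] at hJ2
  set g := ∑ k, p k • gf k (w k) with hg
  have hexp : ‖x - η • g - wstar‖ ^ 2
      = ‖x - wstar‖ ^ 2 - 2 * η * ⟪x - wstar, g⟫ + η ^ 2 * ‖g‖ ^ 2 := by
    have e : x - η • g - wstar = (x - wstar) - η • g := by abel
    rw [e, norm_sub_sq_real, real_inner_smul_right, norm_smul, mul_pow, Real.norm_eq_abs, sq_abs]
    ring
  rw [hexp, hΓ]
  have d1 := mul_le_mul_of_nonneg_left hJ1 (sq_nonneg η)
  have d2 := mul_le_mul_of_nonneg_left hJ2 (by positivity : 0 ≤ μ * η)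
  have d3 := mul_le_mul_of_nonneg_left hE
    (mul_nonneg (by linarith) (mul_nonneg (by positivity) (by linarith)) :
      0 ≤ (1 - 2 * (L * η)) * (2 * η * (1 - L * η)))
  have d4 : 0 ≤ (L * η) * (L * η ^ 2) * (Fglobstar - ∑ k, p k * Fstar k) :=
    mul_nonneg (by positivity) (by linarith)
  linarith
end

section
/- Let μ > 0, B ≥ 0, β > 1/μ, and γ > 0 with γ ≥ βμ − 1. Define η_t = β/(t + γ) for integers t ≥ 1, and let (Δ_t)_{t ≥ 1} be a sequence of nonnegative reals satisfying Δ_{t+1} ≤ (1 − η_t μ) Δ_t + η_t² B for all t ≥ 1. Then for all t ≥ 1, Δ_t ≤ v/(γ + t), where v = max{ β² B/(βμ − 1), (γ + 1) Δ_1 }. -/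
/-- The sequence-induction step used in the proofs of Theorems 1–3 of the FedAvg paper:
a one-step contraction recursion with diminishing step sizes `η_t = β/(t+γ)` yields an
`O(1/t)` rate with the explicit constant `v`. -/
theorem contraction_recursion_rate
    (μ B β γ : ℝ) (hμ : 0 < μ) (hB : 0 ≤ B)
    (hβ : 1 / μ < β) (hγ : 0 < γ) (hγ2 : β * μ - 1 ≤ γ)
    (Δ : ℕ → ℝ) (hΔ : ∀ t : ℕ, 1 ≤ t → 0 ≤ Δ t)
    (hrec : ∀ t : ℕ, 1 ≤ t →
      Δ (t + 1) ≤ (1 - (β / ((t : ℝ) + γ)) * μ) * Δ t + (β / ((t : ℝ) + γ)) ^ 2 * B) :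
    ∀ t : ℕ, 1 ≤ t →
      Δ t ≤ max (β ^ 2 * B / (β * μ - 1)) ((γ + 1) * Δ 1) / (γ + (t : ℝ)) := by
  have hbm : 0 < β * μ - 1 := by
    rw [div_lt_iff₀ hμ] at hβ
    linarith
  set v := max (β ^ 2 * B / (β * μ - 1)) ((γ + 1) * Δ 1) with hv
  have hv1 : β ^ 2 * B ≤ v * (β * μ - 1) := by
    rw [← div_le_iff₀ hbm]
    exact le_max_left _ _
  have hv0 : 0 ≤ v := le_trans (by positivity) (le_max_left _ _)
  intro t ht
  induction t, ht using Nat.le_induction with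
  | base =>
    rw [Nat.cast_one, le_div_iff₀ (by linarith), mul_comm]
    exact le_max_right _ _
  | succ t ht ih =>
    have ht' : (1 : ℝ) ≤ t := by exact_mod_cast ht
    have h := hrec t ht
    rw [add_comm γ (t : ℝ)] at ih
    have hcast : γ + ((t + 1 : ℕ) : ℝ) = ((t : ℝ) + γ) + 1 := by
      push_cast
      ring
    rw [hcast]
    have hs' : β * μ ≤ (t : ℝ) + γ := by linarith
    have hs : 0 < (t : ℝ) + γ := by linarith
    generalize (t : ℝ) + γ = s at *
    have hc : 0 ≤ 1 - β / s * μ := by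
      rw [div_mul_eq_mul_div, sub_nonneg, div_le_one hs]
      exact hs'
    have h1 := mul_le_mul_of_nonneg_left ih hc
    have h2 : (1 - β / s * μ) * (v / s) + (β / s) ^ 2 * B
        = ((s - β * μ) * v + β ^ 2 * B) / s ^ 2 := by
      field_simp
    have h3 : ((s - β * μ) * v + β ^ 2 * B) / s ^ 2 ≤ v / (s + 1) := by
      rw [div_le_div_iff₀ (by positivity) (by positivity)]
      have h4 : (s - β * μ) * v + β ^ 2 * B ≤ (s - 1) * v := by linarith
      have h5 := mul_le_mul_of_nonneg_right h4 (by linarith : 0 ≤ s + 1)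
      nlinarith
    linarith
end

section
/- Let H be a real inner product space, N ≥ 2 and 1 ≤ K ≤ N integers, v_1,…,v_N ∈ H, and v̄ = (1/N) Σ_{i=1}^N v_i. Then (1/C(N,K)) Σ_{S ⊆ {1,…,N}, |S| = K} ‖(1/K) Σ_{i ∈ S} v_i − v̄‖² = ((N−K)/(K·N·(N−1))) Σ_{i=1}^N ‖v_i − v̄‖², where C(N,K) is the binomial coefficient. -/
open Finset

lemma cnt_one (N K : ℕ) (hN : 2 ≤ N) (hK : 1 ≤ K) (i : Fin N) :
    (N : ℝ) * (#{S ∈ powersetCard K (univ : Finset (Fin N)) | i ∈ S} : ℝ)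
      = K * (N.choose K : ℝ) := by
  have h := card_filter_powersetCard_subset {i} (univ : Finset (Fin N)) K (subset_univ _)
    (by simpa using hK)
  simp only [singleton_subset_iff, card_univ, Fintype.card_fin, card_singleton] at h
  rw [h]
  obtain ⟨n, rfl⟩ : ∃ n, N = n + 1 := ⟨N - 1, by omega⟩
  obtain ⟨k, rfl⟩ : ∃ k, K = k + 1 := ⟨K - 1, by omega⟩
  have := Nat.add_one_mul_choose_eq n k
  simp only [Nat.add_sub_cancel]
  rw [mul_comm ((k + 1 : ℕ) : ℝ)]
  exact_mod_cast this

lemma cnt_two (N K : ℕ) (hN : 2 ≤ N) (hK : 1 ≤ K) (i j : Fin N) (hij : i ≠ j) :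
    (N : ℝ) * ((N : ℝ) - 1) * (#{S ∈ powersetCard K (univ : Finset (Fin N)) | i ∈ S ∧ j ∈ S} : ℝ)
      = K * ((K : ℝ) - 1) * (N.choose K : ℝ) := by
  rcases Nat.lt_or_ge K 2 with h2 | h2
  · obtain rfl : K = 1 := by omega
    have : {S ∈ powersetCard 1 (univ : Finset (Fin N)) | i ∈ S ∧ j ∈ S} = ∅ := by
      rw [filter_eq_empty_iff]
      intro S hS h
      rw [mem_powersetCard] at hS
      exact hij (card_le_one.mp hS.2.le i h.1 j h.2)
    rw [this]
    simp
  have h := card_filter_powersetCard_subset {i, j} (univ : Finset (Fin N)) K (subset_univ _)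
    (by rw [card_pair hij]; exact h2)
  simp only [insert_subset_iff, singleton_subset_iff, card_univ, Fintype.card_fin,
    card_pair hij] at h
  rw [h]
  obtain ⟨n, rfl⟩ : ∃ n, N = n + 2 := ⟨N - 2, by omega⟩
  obtain ⟨k, rfl⟩ : ∃ k, K = k + 2 := ⟨K - 2, by omega⟩
  have h1 : ((n + 1 : ℕ) : ℝ) * (n.choose k : ℝ) = ((n + 1).choose (k + 1) : ℝ) * ((k + 1 : ℕ) : ℝ) := by
    exact_mod_cast Nat.add_one_mul_choose_eq n k
  have h2 : ((n + 2 : ℕ) : ℝ) * ((n + 1).choose (k + 1) : ℝ)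
      = ((n + 2).choose (k + 2) : ℝ) * ((k + 2 : ℕ) : ℝ) := by
    exact_mod_cast Nat.add_one_mul_choose_eq (n + 1) (k + 1)
  simp only [Nat.add_sub_cancel]
  push_cast at h1 h2 ⊢
  linear_combination ((n : ℝ) + 2) * h1 + ((k : ℝ) + 1) * h2

lemma sum_norm_sq {H : Type*} [NormedAddCommGroup H] [InnerProductSpace ℝ H]
    (N K : ℕ) (hN : 2 ≤ N) (hK : 1 ≤ K) (w : Fin N → H) (hw : ∑ i, w i = 0) :
    ∑ S ∈ powersetCard K (univ : Finset (Fin N)), ‖∑ i ∈ S, w i‖ ^ 2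
      = (K * ((N : ℝ) - K) / (N * ((N : ℝ) - 1)) * N.choose K) * ∑ i, ‖w i‖ ^ 2 := by
  have hN0 : (N : ℝ) ≠ 0 := by positivity
  have hN1 : (N : ℝ) - 1 ≠ 0 := by
    have : (2 : ℝ) ≤ N := by exact_mod_cast hN
    linarith
  have e1 : ∀ S : Finset (Fin N), ‖∑ i ∈ S, w i‖ ^ 2
      = ∑ i, ∑ j, (if i ∈ S ∧ j ∈ S then (1 : ℝ) else 0) * inner ℝ (w i) (w j) := by
    intro S
    have : ∑ i ∈ S, w i = ∑ i, (if i ∈ S then (1 : ℝ) else 0) • w i := by simp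
    rw [← real_inner_self_eq_norm_sq, this, sum_inner]
    refine sum_congr rfl fun i _ => ?_
    rw [inner_sum]
    refine sum_congr rfl fun j _ => ?_
    rw [real_inner_smul_left, real_inner_smul_right]
    by_cases hi : i ∈ S <;> by_cases hj : j ∈ S <;> simp [hi, hj]
  have e2 : ∀ i j : Fin N, ∑ S ∈ powersetCard K (univ : Finset (Fin N)),
      (if i ∈ S ∧ j ∈ S then (1 : ℝ) else 0)
      = K * ((K : ℝ) - 1) / (N * ((N : ℝ) - 1)) * N.choose K +
        (if i = j then K * ((N : ℝ) - K) / (N * ((N : ℝ) - 1)) * N.choose K else 0) := by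
    intro i j
    rw [sum_boole]
    by_cases hij : i = j
    · subst hij
      have := cnt_one N K hN hK i
      simp only [and_self, if_true]
      field_simp
      linear_combination ((N : ℝ) - 1) * this
    · have := cnt_two N K hN hK i j hij
      simp only [hij, if_false]
      field_simp
      linear_combination this
  simp only [e1]
  rw [sum_comm]
  have e3 : ∀ i : Fin N, ∑ S ∈ powersetCard K (univ : Finset (Fin N)),
      ∑ j, (if i ∈ S ∧ j ∈ S then (1 : ℝ) else 0) * inner ℝ (w i) (w j)
      = (K * ((N : ℝ) - K) / (N * ((N : ℝ) - 1)) * N.choose K) * ‖w i‖ ^ 2 := by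
    intro i
    rw [sum_comm]
    simp only [← sum_mul, e2]
    simp only [add_mul, sum_add_distrib, ite_mul, zero_mul]
    rw [← mul_sum, ← inner_sum, hw]
    simp
  simp only [e3, mul_sum]

/-- The key identity in part (2) of Lemma 5 of the FedAvg paper: variance of the aggregate
under uniform without-replacement sampling of a size-`K` subset (Scheme II with equal weights). -/
theorem scheme_II_variance_identity
    {H : Type*} [NormedAddCommGroup H] [InnerProductSpace ℝ H]
    (N K : ℕ) (hN : 2 ≤ N) (hK : 1 ≤ K) (hKN : K ≤ N)
    (v : Fin N → H) :
    ((N.choose K : ℝ))⁻¹ *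
        ∑ S ∈ Finset.powersetCard K (Finset.univ : Finset (Fin N)),
          ‖((K : ℝ))⁻¹ • (∑ i ∈ S, v i) - ((N : ℝ))⁻¹ • ∑ i, v i‖ ^ 2
      = (((N : ℝ) - (K : ℝ)) / ((K : ℝ) * (N : ℝ) * ((N : ℝ) - 1))) *
          ∑ i, ‖v i - ((N : ℝ))⁻¹ • ∑ j, v j‖ ^ 2 := by
  have hN0 : (N : ℝ) ≠ 0 := by positivity
  have hK0 : (K : ℝ) ≠ 0 := by positivity
  have hN1 : (N : ℝ) - 1 ≠ 0 := by
    have : (2 : ℝ) ≤ N := by exact_mod_cast hN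
    linarith
  have hC : (N.choose K : ℝ) ≠ 0 := by exact_mod_cast (Nat.choose_pos hKN).ne'
  set m : H := ((N : ℝ))⁻¹ • ∑ i, v i with hm
  have hw : ∑ i, (v i - m) = 0 := by
    rw [sum_sub_distrib, sum_const, card_univ, Fintype.card_fin, ← Nat.cast_smul_eq_nsmul ℝ, hm,
      smul_inv_smul₀ hN0, sub_self]
  have key := sum_norm_sq N K hN hK (fun i => v i - m) hw
  have e : ∀ S ∈ powersetCard K (univ : Finset (Fin N)),
      ‖((K : ℝ))⁻¹ • (∑ i ∈ S, v i) - m‖ ^ 2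
        = ((K : ℝ) ^ 2)⁻¹ * ‖∑ i ∈ S, (v i - m)‖ ^ 2 := by
    intro S hS
    rw [mem_powersetCard] at hS
    have : ((K : ℝ))⁻¹ • (∑ i ∈ S, v i) - m = ((K : ℝ))⁻¹ • ∑ i ∈ S, (v i - m) := by
      rw [sum_sub_distrib, sum_const, hS.2, ← Nat.cast_smul_eq_nsmul ℝ, smul_sub,
        inv_smul_smul₀ hK0]
    rw [this, norm_smul, mul_pow]
    simp
  rw [sum_congr rfl e, ← mul_sum, key]
  field_simp
end

section
/- Let A_1,…,A_N be n×n real symmetric positive semidefinite matrices with xᵀ A_i x ≤ 4 ‖x‖² for all x ∈ ℝ^n and all i, and assume A = Σ_{i=1}^N A_i is positive definite. Let 0 < η < 1/4 and let E ≥ 1 be an integer. Then the matrix M = (1/N) Σ_{i=1}^N (I − η A_i)^E is symmetric positive semidefinite, satisfies xᵀ M x < ‖x‖² for every x ≠ 0, and its operator (spectral) norm satisfies ‖M‖ < 1. -/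
open Matrix

lemma aux_sub_sq {n : ℕ} {B : Matrix (Fin n) (Fin n) ℝ} (hB : B.PosSemidef)
    (hB1 : (1 - B).PosSemidef) : (B - B * B).PosSemidef := by
  have h1 := hB1.mul_mul_conjTranspose_same B
  have h2 := hB.mul_mul_conjTranspose_same (1 - B)
  rw [hB.1.eq] at h1
  rw [hB1.1.eq] at h2
  have h := h1.add h2
  have e : B * (1 - B) * B + (1 - B) * B * (1 - B) = B - B * B := by noncomm_ring
  rwa [e] at h

lemma aux_pow_step {n : ℕ} {B : Matrix (Fin n) (Fin n) ℝ} (hB : B.PosSemidef)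
    (hB1 : (1 - B).PosSemidef) (k : ℕ) : (B ^ k - B ^ (k + 1)).PosSemidef := by
  induction k using Nat.twoStepInduction with
  | zero => simpa using hB1
  | one => simpa [pow_two] using aux_sub_sq hB hB1
  | more k ih _ =>
    have h := ih.mul_mul_conjTranspose_same B
    rw [hB.1.eq] at h
    have e : B * (B ^ k - B ^ (k + 1)) * B = B ^ (k + 2) - B ^ (k + 2 + 1) := by
      rw [mul_sub, sub_mul, ← pow_succ', ← pow_succ', ← pow_succ, ← pow_succ]
    rwa [e] at h

lemma aux_pow {n : ℕ} {B : Matrix (Fin n) (Fin n) ℝ} (hB : B.PosSemidef)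
    (hB1 : (1 - B).PosSemidef) (k : ℕ) : (B - B ^ (k + 1)).PosSemidef := by
  induction k with
  | zero => simpa using PosSemidef.zero
  | succ k ih =>
    have h := ih.add (aux_pow_step hB hB1 (k + 1))
    rwa [sub_add_sub_cancel] at h

/-- The contraction claim in the proof of Theorem 4 of the FedAvg paper:
`M = (1/N) Σᵢ (I − ηAᵢ)^E` is symmetric PSD, its quadratic form is strictly below `‖x‖²`
for `x ≠ 0`, and its Euclidean operator norm is `< 1`. -/
theorem fedavg_contraction (n N : ℕ) (hN : 1 ≤ N)
    (A : Fin N → Matrix (Fin n) (Fin n) ℝ)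
    (hA : ∀ i, (A i).PosSemidef)
    (hA4 : ∀ i (x : Fin n → ℝ), x ⬝ᵥ (A i).mulVec x ≤ 4 * (x ⬝ᵥ x))
    (hsum : (∑ i, A i).PosDef)
    (η : ℝ) (hη0 : 0 < η) (hη : η < 1 / 4)
    (E : ℕ) (hE : 1 ≤ E) :
    (((N : ℝ))⁻¹ • ∑ i, (1 - η • A i) ^ E).PosSemidef
      ∧ (∀ x : Fin n → ℝ, x ≠ 0 →
          x ⬝ᵥ (((N : ℝ))⁻¹ • ∑ i, (1 - η • A i) ^ E).mulVec x < x ⬝ᵥ x)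
      ∧ ‖Matrix.toEuclideanCLM (𝕜 := ℝ) (((N : ℝ))⁻¹ • ∑ i, (1 - η • A i) ^ E)‖ < 1 := by
  have hNpos : (0 : ℝ) < N := by exact_mod_cast hN
  have hηA : ∀ i, (η • A i).PosSemidef := fun i => (hA i).smul hη0.le
  have hB1 : ∀ i, (1 - (1 - η • A i)).PosSemidef := fun i => by simpa using hηA i
  have hB : ∀ i, (1 - η • A i).PosSemidef := fun i => by
    refine PosSemidef.of_dotProduct_mulVec_nonneg (isHermitian_one.sub (hηA i).1) fun x => ?_
    have h4 := hA4 i x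
    have h0 : 0 ≤ x ⬝ᵥ x := by
      simpa using dotProduct_star_self_nonneg x
    simp only [star_trivial, sub_mulVec, one_mulVec, smul_mulVec, dotProduct_sub,
      dotProduct_smul, smul_eq_mul]
    nlinarith
  obtain ⟨k, rfl⟩ : ∃ k, E = k + 1 := ⟨E - 1, by omega⟩
  set M := ((N : ℝ))⁻¹ • ∑ i, (1 - η • A i) ^ (k + 1) with hM
  have hP : M.PosSemidef :=
    (posSemidef_sum _ fun i _ => (hB i).pow _).smul (inv_nonneg.2 hNpos.le)
  have hlt : ∀ x : Fin n → ℝ, x ≠ 0 → x ⬝ᵥ M.mulVec x < x ⬝ᵥ x := by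
    intro x hx
    have hs := hsum.dotProduct_mulVec_pos hx
    have hi : ∀ i, x ⬝ᵥ ((1 - η • A i) ^ (k + 1)) *ᵥ x ≤ x ⬝ᵥ x - η * (x ⬝ᵥ A i *ᵥ x) := by
      intro i
      have h := (aux_pow (hB i) (hB1 i) k).dotProduct_mulVec_nonneg x
      rw [star_trivial, sub_mulVec, dotProduct_sub] at h
      simp only [sub_mulVec, one_mulVec, smul_mulVec, dotProduct_sub,
        dotProduct_smul, smul_eq_mul] at h
      linarith
    have hsum' := Finset.sum_le_sum fun i (_ : i ∈ Finset.univ) => hi i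
    rw [Finset.sum_sub_distrib, ← Finset.mul_sum] at hsum'
    simp only [star_trivial, sum_mulVec, dotProduct_sum] at hs
    simp only [Finset.sum_const, Finset.card_univ, Fintype.card_fin, nsmul_eq_mul] at hsum'
    rw [hM, smul_mulVec, dotProduct_smul, sum_mulVec, dotProduct_sum, smul_eq_mul,
      inv_mul_lt_iff₀ hNpos]
    nlinarith [mul_pos hη0 hs]
  refine ⟨hP, hlt, ?_⟩
  have hM1 : (1 - M).PosSemidef := by
    refine PosSemidef.of_dotProduct_mulVec_nonneg (isHermitian_one.sub hP.1) fun x => ?_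
    rw [star_trivial, sub_mulVec, one_mulVec, dotProduct_sub]
    by_cases hx : x = 0
    · simp [hx]
    · linarith [hlt x hx]
  set T := Matrix.toEuclideanCLM (𝕜 := ℝ) M with hT
  have hTlt : ∀ x : EuclideanSpace ℝ (Fin n), x ≠ 0 → ‖T x‖ < ‖x‖ := by
    intro x hx
    have hx' : x.ofLp ≠ 0 := fun h => hx (by ext i; simp [h])
    have h1 := (aux_sub_sq hP hM1).dotProduct_mulVec_nonneg x.ofLp
    have h2 := hlt _ hx'
    rw [star_trivial, sub_mulVec, dotProduct_sub, ← mulVec_mulVec] at h1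
    have h3 : x.ofLp ⬝ᵥ M *ᵥ (M *ᵥ x.ofLp) = (M *ᵥ x.ofLp) ⬝ᵥ (M *ᵥ x.ofLp) := by
      rw [dotProduct_mulVec]
      congr 1
      have := hP.1.eq
      rw [conjTranspose_eq_transpose_of_trivial] at this
      rw [← mulVec_transpose, this]
    have e : ∀ y : EuclideanSpace ℝ (Fin n), ‖y‖ ^ 2 = y.ofLp ⬝ᵥ y.ofLp := by
      intro y
      rw [EuclideanSpace.real_norm_sq_eq]
      simp [dotProduct, pow_two]
    have e1 : (T x).ofLp = M *ᵥ x.ofLp := by simp [hT]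
    refine lt_of_pow_lt_pow_left₀ 2 (norm_nonneg _) ?_
    rw [e, e, e1]
    linarith
  rcases subsingleton_or_nontrivial (EuclideanSpace ℝ (Fin n)) with hs | hs
  · have : T = 0 := by ext x; simp [Subsingleton.elim x 0]
    simp [this]
  · obtain ⟨x, hx, hmax⟩ := (isCompact_sphere (0 : EuclideanSpace ℝ (Fin n)) 1).exists_isMaxOn
      (NormedSpace.sphere_nonempty.2 zero_le_one) (f := fun x => ‖T x‖) (by fun_prop)
    have hx1 : ‖x‖ = 1 := by simpa using hx
    refine lt_of_le_of_lt (T.opNorm_le_of_unit_norm (norm_nonneg (T x)) fun y hy => ?_)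
      ((hTlt x (by rintro rfl; simp at hx1)).trans_eq hx1)
    exact hmax (by simpa using hy)
end

section
/- Let H be a real inner product space, N ≥ 1, and p_1,…,p_N ≥ 0 with Σ_k p_k = 1. Let F_1,…,F_N : H → ℝ be differentiable, convex (i.e., F_k(v) ≥ F_k(w) + ⟨∇F_k(w), v−w⟩ for all v,w), and L-smooth (L > 0), each bounded below with infimum F_k^*. Let F = Σ_k p_k F_k. Then for any points w_1,…,w_N ∈ H with w̄ = Σ_k p_k w_k, and any η > 0, Σ_{k=1}^N p_k F_k(w_k) ≥ F(w̄) − Σ_{k=1}^N p_k [ η L (F_k(w̄) − F_k^*) + (1/(2η)) ‖w_k − w̄‖² ]. -/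
open Finset
open scoped RealInnerProductSpace

/-- Lower bound on D = Σₖ pₖ (Fₖ(wₖ) − F*) from the proof of Lemma 1 of the FedAvg paper. -/
theorem weighted_obj_lower_bound
    {H : Type*} [NormedAddCommGroup H] [InnerProductSpace ℝ H]
    (N : ℕ) (hN : 1 ≤ N)
    (p : Fin N → ℝ) (hp : ∀ k, 0 ≤ p k) (hpsum : ∑ k, p k = 1)
    (F : Fin N → H → ℝ) (gf : Fin N → H → H)
    (L : ℝ) (hL : 0 < L)
    (hdiff : ∀ k x, HasFDerivAt (F k) ((innerSL ℝ) (gf k x)) x)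
    (hconv : ∀ k v u, F k v ≥ F k u + ⟪gf k u, v - u⟫)
    (hsmooth : ∀ k v u, F k v ≤ F k u + ⟪gf k u, v - u⟫ + L / 2 * ‖v - u‖ ^ 2)
    (Fstar : Fin N → ℝ) (hFstar : ∀ k, IsGLB (Set.range (F k)) (Fstar k))
    (w : Fin N → H) (η : ℝ) (hη : 0 < η) :
    ∑ k, p k * F k (w k) ≥
      (∑ k, p k * F k (∑ j, p j • w j))
        - ∑ k, p k * (η * L * (F k (∑ j, p j • w j) - Fstar k)
            + 1 / (2 * η) * ‖w k - ∑ j, p j • w j‖ ^ 2) := by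
  generalize (∑ j, p j • w j) = b
  rw [ge_iff_le, ← Finset.sum_sub_distrib]
  refine Finset.sum_le_sum fun k _ => ?_
  rw [← mul_sub]
  refine mul_le_mul_of_nonneg_left ?_ (hp k)
  have h1 : Fstar k ≤ F k (b - (1 / L) • gf k b) := (hFstar k).1 ⟨_, rfl⟩
  have h2 := hsmooth k (b - (1 / L) • gf k b) b
  have e : b - (1 / L) • gf k b - b = -((1 / L) • gf k b) := by abel
  rw [e, inner_neg_right, norm_neg, real_inner_smul_right, real_inner_self_eq_norm_sq,
    norm_smul, mul_pow, Real.norm_eq_abs, sq_abs] at h2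
  have h3 : ‖gf k b‖ ^ 2 ≤ 2 * L * (F k b - Fstar k) := by
    have e2 : -(1 / L * ‖gf k b‖ ^ 2) + L / 2 * ((1 / L) ^ 2 * ‖gf k b‖ ^ 2)
        = -(‖gf k b‖ ^ 2 / (2 * L)) := by
      field_simp
      ring
    have h4 : ‖gf k b‖ ^ 2 / (2 * L) ≤ F k b - Fstar k := by linarith
    rw [div_le_iff₀ (by positivity)] at h4
    linarith
  have h5 : 0 ≤ ‖η • gf k b + (w k - b)‖ ^ 2 := by positivity
  rw [norm_add_sq_real, real_inner_smul_left, norm_smul, mul_pow, Real.norm_eq_abs, sq_abs] at h5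
  have h6 := hconv k (w k) b
  have h7 : 0 ≤ (η ^ 2 * ‖gf k b‖ ^ 2 + 2 * (η * ⟪gf k b, w k - b⟫) + ‖w k - b‖ ^ 2) / (2 * η) := by
    positivity
  have e3 : (η ^ 2 * ‖gf k b‖ ^ 2 + 2 * (η * ⟪gf k b, w k - b⟫) + ‖w k - b‖ ^ 2) / (2 * η)
      = η / 2 * ‖gf k b‖ ^ 2 + ⟪gf k b, w k - b⟫ + 1 / (2 * η) * ‖w k - b‖ ^ 2 := by
    field_simp
  have h8 := mul_le_mul_of_nonneg_left h3 (by positivity : 0 ≤ η / 2)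
  rw [e3] at h7
  linarith
end
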